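/- arXiv:math/0703473 — 2 statements merged into one kernel-verified Lean document; each statement's English description precedes it below -/
import Mathlib

section
/- Let p be a rational prime with p ≡ 1 (mod 4), and let π, π' ∈ ℤ[i] be prime elements such that π·π' is associated to (p : ℤ[i]). Then for all integers 0 ≤ l ≤ μ, the additive group of the quotient ℤ[i]/(π^l · π'^{μ−l}) is isomorphic to ZMod (p^l) × ZMod (p^{μ−l}). -/
local notation "ℤ[i]" => GaussianInt

/-!
If `z = a + b√d` has coprime coordinates, then `√d` is congruent to an integer modulo `z`, so
`ℤ → ℤ√d ⧸ (z)` is onto; its kernel is generated by the norm of `z`. Passing to powers is safe once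
`z` is coprime to its conjugate, a condition which is stable under powers and forces coprime
coordinates. A nontrivial factor `z` of a prime `p ∤ 2d` has norm `± p`, hence coprime coordinates,
and is coprime to its conjugate because `p` is prime to the discriminant `4d`. The cofactor is an
associate of this conjugate, so the Chinese remainder theorem splits the quotient.
-/

section Zsqrtd

variable {d : ℤ} {z w : ℤ√d}

theorem dvd_intCast_iff_norm_dvd (hz : IsCoprime z.re z.im) {k : ℤ} :
    z ∣ (k : ℤ√d) ↔ z.norm ∣ k := by
  constructor
  · rintro ⟨x, hx⟩
    have hdvd : (z.norm : ℤ√d) ∣ star z * k := by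
      rw [Zsqrtd.norm_eq_mul_conj, hx]
      exact ⟨x, by ring⟩
    obtain ⟨hre, him⟩ := (Zsqrtd.intCast_dvd _ _).mp hdvd
    replace hre : z.norm ∣ z.re * k := by simpa using hre
    replace him : z.norm ∣ z.im * k := by simpa using him
    obtain ⟨u, v, huv⟩ := hz
    have hk : k = u * (z.re * k) + v * (z.im * k) := by linear_combination (-k) * huv
    rw [hk]
    exact dvd_add (hre.mul_left u) (him.mul_left v)
  · intro h
    have hz_norm : z ∣ (z.norm : ℤ√d) := ⟨star z, Zsqrtd.norm_eq_mul_conj z⟩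
    exact hz_norm.trans (Int.cast_dvd_cast _ _ h)

theorem ker_intCast_quotient_span_singleton (hz : IsCoprime z.re z.im) :
    RingHom.ker (Int.castRingHom (ℤ√d ⧸ Ideal.span {z})) = Ideal.span {z.norm} := by
  ext k
  rw [RingHom.mem_ker, eq_intCast, ← map_intCast (Ideal.Quotient.mk (Ideal.span {z})),
    Ideal.Quotient.eq_zero_iff_mem, Ideal.mem_span_singleton, Ideal.mem_span_singleton,
    dvd_intCast_iff_norm_dvd hz]

theorem intCast_quotient_span_singleton_surjective (hz : IsCoprime z.re z.im) :
    Function.Surjective (Int.castRingHom (ℤ√d ⧸ Ideal.span {z})) := by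
  obtain ⟨u, v, huv⟩ := hz
  -- `z * (v + u√d)` has imaginary part `1`, so `√d` is minus its real part modulo `z`.
  have hsqrtd : Zsqrtd.sqrtd + ((z.re * v + d * z.im * u : ℤ) : ℤ√d) = z * ⟨v, u⟩ := by
    ext
    · simp
    · simp only [Zsqrtd.im_add, Zsqrtd.im_sqrtd, Zsqrtd.im_intCast, Zsqrtd.im_mul]
      linear_combination -huv
  intro y
  obtain ⟨x, rfl⟩ := Ideal.Quotient.mk_surjective y
  refine ⟨x.re - x.im * (z.re * v + d * z.im * u), ?_⟩
  rw [eq_intCast, ← map_intCast (Ideal.Quotient.mk (Ideal.span {z})), eq_comm,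
    Ideal.Quotient.eq, Ideal.mem_span_singleton]
  refine ⟨x.im * ⟨v, u⟩, ?_⟩
  have hx : x = (x.re : ℤ√d) + Zsqrtd.sqrtd * (x.im : ℤ√d) := Zsqrtd.decompose
  rw [mul_left_comm, ← hsqrtd]
  nth_rw 1 [hx]
  push_cast
  ring

/-- The residue ring of `ℤ√d` modulo an element with coprime coordinates, identified with the
integers modulo its norm, which may be negative, whence the absolute value. -/
noncomputable def zsqrtdQuotientEquivZMod (hz : IsCoprime z.re z.im) :
    (ℤ√d ⧸ Ideal.span {z}) ≃+* ZMod z.norm.natAbs :=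
  (RingHom.quotientKerEquivOfSurjective (intCast_quotient_span_singleton_surjective hz)).symm.trans
    ((Ideal.quotEquivOfEq (ker_intCast_quotient_span_singleton hz)).trans
      (Int.quotientSpanEquivZMod z.norm))

theorem isCoprime_re_im_of_isCoprime_star (h : IsCoprime z (star z)) : IsCoprime z.re z.im := by
  obtain ⟨a, b, hab⟩ := h
  have hre := congrArg Zsqrtd.re hab
  simp only [Zsqrtd.re_add, Zsqrtd.re_mul, Zsqrtd.re_star, Zsqrtd.im_star, Zsqrtd.re_one] at hre
  exact ⟨a.re + b.re, d * (a.im - b.im), by linear_combination hre⟩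

theorem natAbs_norm_pow (z : ℤ√d) (n : ℕ) : (z ^ n).norm.natAbs = z.norm.natAbs ^ n := by
  rw [← Int.natAbs_pow]
  exact congrArg Int.natAbs (map_pow Zsqrtd.normMonoidHom z n)

/-- The residue ring of `ℤ√d` modulo a power of an element coprime to its conjugate, identified
with the integers modulo that power of the norm. -/
noncomputable def zsqrtdQuotientPowEquivZMod (hz : IsCoprime z (star z)) (n : ℕ) :
    (ℤ√d ⧸ Ideal.span {z ^ n}) ≃+* ZMod (z.norm.natAbs ^ n) :=
  have hzn : IsCoprime (z ^ n) (star (z ^ n)) := star_pow z n ▸ hz.pow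
  (zsqrtdQuotientEquivZMod (isCoprime_re_im_of_isCoprime_star hzn)).trans
    (ZMod.ringEquivCongr (natAbs_norm_pow z n))

/-- The residue ring of `ℤ√d` modulo a product of powers of two coprime elements, each coprime to
its conjugate, split by the Chinese remainder theorem. -/
noncomputable def zsqrtdQuotientPowMulPowEquivZModProd (hz : IsCoprime z (star z))
    (hw : IsCoprime w (star w)) (hzw : IsCoprime z w) (k l : ℕ) :
    (ℤ√d ⧸ Ideal.span {z ^ k * w ^ l}) ≃+*
      ZMod (z.norm.natAbs ^ k) × ZMod (w.norm.natAbs ^ l) :=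
  (Ideal.quotEquivOfEq (Ideal.span_singleton_mul_span_singleton _ _).symm).trans <|
    (Ideal.quotientMulEquivQuotientProd _ _
      ((Ideal.isCoprime_span_singleton_iff _ _).mpr hzw.pow)).trans <|
    (zsqrtdQuotientPowEquivZMod hz k).prodCongr (zsqrtdQuotientPowEquivZMod hw l)

theorem isCoprime_re_im_of_squarefree_norm (h : Squarefree z.norm) : IsCoprime z.re z.im := by
  rw [← gcd_isUnit_iff]
  refine h _ ?_
  have hre := gcd_dvd_left z.re z.im
  have him := gcd_dvd_right z.re z.im
  rw [Zsqrtd.norm_def, mul_assoc d]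
  exact dvd_sub (mul_dvd_mul hre hre) ((mul_dvd_mul him him).mul_left d)

theorem isCoprime_star_of_isCoprime_norm_trace (h : IsCoprime z.norm (2 * z.re)) :
    IsCoprime z (star z) := by
  obtain ⟨a, b, hab⟩ := h
  have htrace : ((2 * z.re : ℤ) : ℤ√d) = z + star z := by
    ext
    · simp [two_mul]
    · simp
  have hab' : (a : ℤ√d) * (z * star z) + b * (z + star z) = 1 := by
    rw [← Zsqrtd.norm_eq_mul_conj, ← htrace]
    exact_mod_cast hab
  exact ⟨a * star z + b, b, by linear_combination hab'⟩

theorem isCoprime_star_of_isCoprime_norm_two_mul (hz : IsCoprime z.re z.im)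
    (hN : IsCoprime z.norm (2 * d)) : IsCoprime z (star z) := by
  obtain ⟨hN2, hNd⟩ := IsCoprime.mul_right_iff.mp hN
  have hre_d : IsCoprime z.re d := by
    have h : IsCoprime (z.re * z.re + d * -(z.im * z.im)) d := by
      convert hNd using 1
      rw [Zsqrtd.norm_def]
      ring
    exact h.of_add_mul_left_left.of_mul_left_left
  have hre_norm : IsCoprime z.re z.norm := by
    have h : IsCoprime z.re (-(d * (z.im * z.im)) + z.re * z.re) :=
      (hre_d.mul_right (hz.mul_right hz)).neg_right.add_mul_left_right z.re
    convert h using 1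
    rw [Zsqrtd.norm_def]
    ring
  exact isCoprime_star_of_isCoprime_norm_trace (hN2.mul_right hre_norm.symm)

theorem natAbs_norm_eq_of_associated_mul_prime {p : ℕ} (hp : p.Prime) (hz : ¬IsUnit z)
    (hw : ¬IsUnit w) (h : Associated (z * w) (p : ℤ√d)) : z.norm.natAbs = p := by
  have hnorm : (z * w).norm.natAbs = (p : ℤ√d).norm.natAbs :=
    Int.natAbs_eq_iff_associated.mpr (h.map Zsqrtd.normMonoidHom)
  have hmul : z.norm.natAbs * w.norm.natAbs = p ^ 2 := by
    rw [← Int.natAbs_mul, ← Zsqrtd.norm_mul, hnorm, Zsqrtd.norm_natCast, Int.natAbs_mul,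
      Int.natAbs_natCast, sq]
  exact ((hp.mul_eq_prime_sq_iff (mt Zsqrtd.norm_eq_one_iff.mp hz)
    (mt Zsqrtd.norm_eq_one_iff.mp hw)).mp hmul).1

theorem isCoprime_star_of_prime_norm (hN : Prime z.norm) (hd : ¬z.norm ∣ 2 * d) :
    IsCoprime z (star z) :=
  isCoprime_star_of_isCoprime_norm_two_mul (isCoprime_re_im_of_squarefree_norm hN.squarefree)
    (hN.coprime_iff_not_dvd.mpr hd)

theorem dvd_star_of_mul_dvd_norm (hz : z.norm ≠ 0) (h : z * w ∣ (z.norm : ℤ√d)) :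
    w ∣ star z := by
  obtain ⟨c, hc⟩ := h
  refine ⟨c, Zsqrtd.eq_of_smul_eq_smul_left hz ?_⟩
  calc (z.norm : ℤ√d) * star z = z * w * c * star z := by rw [← hc]
    _ = z * star z * (w * c) := by ring
    _ = z.norm * (w * c) := by rw [Zsqrtd.norm_eq_mul_conj]

end Zsqrtd

theorem gaussian_quotient_mixed_prime_powers_general {d : ℤ} {p : ℕ} (hp : p.Prime)
    (hpd : ¬(p : ℤ) ∣ 2 * d) {z w : ℤ√d} (hz : ¬IsUnit z) (hw : ¬IsUnit w)
    (h : Associated (z * w) (p : ℤ√d)) (k l : ℕ) :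
    Nonempty ((ℤ√d ⧸ Ideal.span {z ^ k * w ^ l}) ≃+* ZMod (p ^ k) × ZMod (p ^ l)) := by
  have hNz : z.norm.natAbs = p := natAbs_norm_eq_of_associated_mul_prime hp hz hw h
  have hNw : w.norm.natAbs = p :=
    natAbs_norm_eq_of_associated_mul_prime hp hw hz (mul_comm z w ▸ h)
  have hz_star : IsCoprime z (star z) :=
    isCoprime_star_of_prime_norm (Int.prime_iff_natAbs_prime.mpr (hNz ▸ hp))
      (by rwa [← Int.natAbs_dvd, hNz])
  have hw_star : IsCoprime w (star w) :=
    isCoprime_star_of_prime_norm (Int.prime_iff_natAbs_prime.mpr (hNw ▸ hp))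
      (by rwa [← Int.natAbs_dvd, hNw])
  have hp_dvd : (p : ℤ√d) ∣ z.norm :=
    mod_cast (Zsqrtd.intCast_dvd_intCast (d := d) p z.norm).mpr (Int.natCast_dvd.mpr hNz.symm.dvd)
  have hw_dvd : w ∣ star z :=
    dvd_star_of_mul_dvd_norm (Int.natAbs_ne_zero.mp (hNz ▸ hp.ne_zero)) (h.dvd.trans hp_dvd)
  have hzw : IsCoprime z w := hz_star.of_isCoprime_of_dvd_right hw_dvd
  have e := zsqrtdQuotientPowMulPowEquivZModProd hz_star hw_star hzw k l
  rw [hNz, hNw] at e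
  exact ⟨e⟩

/-- for a rational prime `p ≡ 1 (mod 4)` and primes `π, π' ∈ ℤ[i]` with
`π·π'` associated to `p`, for all `0 ≤ l ≤ μ` the additive group of
`ℤ[i]/(π^l · π'^(μ−l))` is isomorphic to `ZMod (p^l) × ZMod (p^(μ−l))`. -/
theorem gaussian_quotient_mixed_prime_powers (p : ℕ) (hp : p.Prime) (hp4 : p % 4 = 1)
    (π π' : ℤ[i]) (hπ : Prime π) (hπ' : Prime π')
    (hassoc : Associated (π * π') (p : ℤ[i])) :
    ∀ μ l : ℕ, l ≤ μ →
      Nonempty ((ℤ[i] ⧸ Ideal.span {π ^ l * π' ^ (μ - l)}) ≃+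
        (ZMod (p ^ l) × ZMod (p ^ (μ - l)))) := by
  intro μ l _
  have hp_ne : p ≠ 2 := by
    rintro rfl
    norm_num at hp4
  have hp_two : ¬(p : ℤ) ∣ 2 * -1 := by
    rw [mul_neg_one, dvd_neg]
    exact_mod_cast (Nat.prime_dvd_prime_iff_eq hp Nat.prime_two).not.mpr hp_ne
  obtain ⟨e⟩ := gaussian_quotient_mixed_prime_powers_general hp hp_two hπ.not_isUnit
    hπ'.not_isUnit hassoc l (μ - l)
  exact ⟨e.toAddEquiv⟩
end

section
/- Let p be a rational prime with p ≡ 1 (mod 6), and let π, π' ∈ ℤ[ζ] be prime elements such that π·π' is associated to (p : ℤ[ζ]). Then for all integers 0 ≤ l ≤ μ, the additive group of the quotient ℤ[ζ]/(π^l · π'^{μ−l}) is isomorphic to ZMod (p^l) × ZMod (p^{μ−l}). -/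
open Polynomial

/-- The ring of Eisenstein integers `ℤ[ζ]`, with `ζ` a primitive cube root of unity. -/
abbrev Eisenstein : Type := AdjoinRoot (X ^ 2 + X + 1 : ℤ[X])

/-!
Let `R` be a ring that is free of rank two over `ℤ`, and let `P * Q = (p)` with `P`, `Q` coprime and
proper. Cancelling powers of `p` shows that `p ^ k ∉ P ^ (k + 1)`, so `R ⧸ P ^ k` has characteristic
`p ^ k` and hence at least `p ^ k` elements, and the same holds for `Q`. By the Chinese remainder
theorem the orders of `R ⧸ P ^ k` and `R ⧸ Q ^ k` multiply to that of `R ⧸ (p ^ k)`, which is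
`p ^ (2 * k)`. So both orders are exactly `p ^ k`, and both quotients are `ZMod (p ^ k)`.

For the Eisenstein integers, `P` and `Q` are coprime because `X ^ 2 + X + 1` is separable modulo
`p ≠ 3`, which makes `R ⧸ (p)` reduced and rules out `P = Q`.
-/

section ProductOfCoprimeIdeals

variable {R : Type*} [CommRing R] {x : R} {P Q : Ideal R}

lemma eq_top_of_span_singleton_le_span_singleton_mul (hx : x ∈ nonZeroDivisors R)
    (h : Ideal.span {x} ≤ Ideal.span {x} * P) : P = ⊤ := by
  obtain ⟨y, hyP, hxy⟩ := Ideal.mem_span_singleton_mul.mp (h (Ideal.mem_span_singleton_self x))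
  have hy : y = 1 := (mul_cancel_left_mem_nonZeroDivisors hx).mp (hxy.trans (mul_one x).symm)
  exact (Ideal.eq_top_iff_one P).mpr (hy ▸ hyP)

lemma pow_notMem_pow_succ_of_mul_eq_span_singleton (hx : x ∈ nonZeroDivisors R)
    (hP : P ≠ ⊤) (hcop : IsCoprime P Q) (hPQ : P * Q = Ideal.span {x}) (k : ℕ) :
    x ^ k ∉ P ^ (k + 1) := by
  intro hmem
  have hPQk : P ^ k * Q ^ k = Ideal.span {x ^ k} := by
    rw [← mul_pow, hPQ, Ideal.span_singleton_pow]
  have hstable : P ^ k ≤ P ^ (k + 1) := calc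
    P ^ k = P ^ k * (P ⊔ Q ^ k) := by
      rw [Ideal.sup_pow_eq_top (Ideal.isCoprime_iff_sup_eq.mp hcop), Ideal.mul_top]
    _ = P ^ (k + 1) ⊔ Ideal.span {x ^ k} := by rw [Ideal.mul_sup, ← pow_succ, hPQk]
    _ ≤ P ^ (k + 1) := sup_le le_rfl ((Ideal.span_singleton_le_iff_mem _).mpr hmem)
  refine hP (eq_top_of_span_singleton_le_span_singleton_mul (pow_mem hx k) ?_)
  calc Ideal.span {x ^ k} = P ^ k * Q ^ k := hPQk.symm
    _ ≤ P ^ (k + 1) * Q ^ k := Ideal.mul_mono_left hstable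
    _ = Ideal.span {x ^ k} * P := by rw [← hPQk, pow_succ, mul_right_comm]

lemma charP_quotient_pow_of_mul_eq_span_natCast {p : ℕ} (hp : p.Prime)
    (hp₀ : (p : R) ∈ nonZeroDivisors R) (hP : P ≠ ⊤) (hcop : IsCoprime P Q)
    (hPQ : P * Q = Ideal.span {(p : R)}) (k : ℕ) : CharP (R ⧸ P ^ k) (p ^ k) := by
  have hpP : (p : R) ∈ P :=
    (Ideal.span_singleton_le_iff_mem P).mp (hPQ.symm.le.trans Ideal.mul_le_left)
  have hzero (j : ℕ) : p ^ j • (1 : R ⧸ P ^ k) = 0 ↔ (p : R) ^ j ∈ P ^ k := by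
    rw [nsmul_one, ← Ideal.Quotient.eq_zero_iff_mem, map_pow, map_natCast, Nat.cast_pow]
  suffices horder : addOrderOf (1 : R ⧸ P ^ k) = p ^ k from horder ▸ CharP.addOrderOf_one _
  cases k with
  | zero =>
    have : Subsingleton (R ⧸ P ^ 0) := Ideal.Quotient.subsingleton_iff.mpr (by simp)
    rw [Subsingleton.elim (1 : R ⧸ P ^ 0) 0, addOrderOf_zero, pow_zero]
  | succ k =>
    have := Fact.mk hp
    apply addOrderOf_eq_prime_pow
    · rw [hzero]
      exact pow_notMem_pow_succ_of_mul_eq_span_singleton hp₀ hP hcop hPQ k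
    · rw [hzero]
      exact Ideal.pow_mem_pow hpP (k + 1)

lemma pow_le_natCard_quotient_pow {p : ℕ} (hp : p.Prime)
    (hp₀ : (p : R) ∈ nonZeroDivisors R) (hP : P ≠ ⊤) (hcop : IsCoprime P Q)
    (hPQ : P * Q = Ideal.span {(p : R)}) (k : ℕ) [Finite (R ⧸ P ^ k)] :
    p ^ k ≤ Nat.card (R ⧸ P ^ k) := by
  have := charP_quotient_pow_of_mul_eq_span_natCast hp hp₀ hP hcop hPQ k
  simpa using Nat.card_le_card_of_injective _ (ZMod.castHom_injective (n := p ^ k) (R ⧸ P ^ k))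

lemma isCoprime_of_mul_eq_span_singleton_of_isReduced (hx : x ∈ nonZeroDivisors R)
    [Finite (R ⧸ Ideal.span {x})] [IsReduced (R ⧸ Ideal.span {x})] [P.IsPrime] [Q.IsPrime]
    (hPQ : P * Q = Ideal.span {x}) : IsCoprime P Q := by
  have isMaximal_of_le {I : Ideal R} [I.IsPrime] (hI : Ideal.span {x} ≤ I) : I.IsMaximal := by
    have : Finite (R ⧸ I) := Finite.of_surjective _ (Ideal.Quotient.factor_surjective hI)
    exact Ideal.Quotient.maximal_of_isField I (Finite.isField_of_domain _)
  have hPmax : P.IsMaximal := isMaximal_of_le (hPQ.symm.le.trans Ideal.mul_le_left)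
  have hQmax : Q.IsMaximal := isMaximal_of_le (hPQ.symm.le.trans Ideal.mul_le_right)
  refine Ideal.isCoprime_of_isMaximal fun hne => ?_
  subst hne
  have hle : P ≤ Ideal.span {x} := fun y hy =>
    (Ideal.isRadical_iff_quotient_reduced _).mpr ‹_› ⟨2, hPQ ▸ sq y ▸ Ideal.mul_mem_mul hy hy⟩
  refine hPmax.ne_top (eq_top_of_span_singleton_le_span_singleton_mul hx ?_)
  exact hPQ.symm.le.trans (Ideal.mul_mono_left hle)

end ProductOfCoprimeIdeals

lemma natCast_mem_nonZeroDivisors_of_isTorsionFree {R : Type*} [CommRing R]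
    [Module.IsTorsionFree ℤ R] {n : ℕ} (hn : n ≠ 0) : (n : R) ∈ nonZeroDivisors R := by
  refine mem_nonZeroDivisors_iff_right.mpr fun y hy => ?_
  rw [mul_comm, ← Int.cast_natCast, ← zsmul_eq_mul] at hy
  exact (smul_eq_zero_iff_right (Int.natCast_ne_zero.mpr hn)).mp hy

section FreeOverInt

variable {R : Type*} [CommRing R] [Module.Free ℤ R]

lemma natCard_quotient_span_natCast [Module.Finite ℤ R] (n : ℕ) [NeZero n] :
    Nat.card (R ⧸ Ideal.span {(n : R)}) = n ^ Module.finrank ℤ R := by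
  have hmultiples : (Ideal.span {(n : R)}).toAddSubgroup =
      (LinearMap.range (LinearMap.lsmul ℤ R n)).toAddSubgroup := by
    ext y
    simp [Ideal.mem_span_singleton', mul_comm]
  rw [← ModN.natCard_eq R n]
  exact congrArg AddSubgroup.index hmultiples

variable {p : ℕ} {P Q : Ideal R}

lemma natCard_quotient_pow_of_mul_eq_span_natCast (hR : Module.finrank ℤ R = 2) (hp : p.Prime)
    (hP : P ≠ ⊤) (hQ : Q ≠ ⊤) (hcop : IsCoprime P Q) (hPQ : P * Q = Ideal.span {(p : R)}) (k : ℕ) :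
    Nat.card (R ⧸ P ^ k) = p ^ k := by
  have : Module.Finite ℤ R := Module.finite_of_finrank_pos (by omega)
  have : NeZero (p ^ k) := ⟨pow_ne_zero k hp.ne_zero⟩
  have hp₀ : (p : R) ∈ nonZeroDivisors R := natCast_mem_nonZeroDivisors_of_isTorsionFree hp.ne_zero
  have hcard : Nat.card (R ⧸ P ^ k) * Nat.card (R ⧸ Q ^ k) = p ^ k * p ^ k := calc
    _ = Nat.card (R ⧸ P ^ k * Q ^ k) := (cardQuot_mul_of_coprime hcop.pow).symm
    _ = Nat.card (R ⧸ Ideal.span {((p ^ k : ℕ) : R)}) := by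
      rw [← mul_pow, hPQ, Ideal.span_singleton_pow, Nat.cast_pow]
    _ = p ^ k * p ^ k := by rw [natCard_quotient_span_natCast, hR, sq]
  have hne : Nat.card (R ⧸ P ^ k) * Nat.card (R ⧸ Q ^ k) ≠ 0 :=
    hcard.trans_ne (mul_self_ne_zero.mpr (NeZero.ne _))
  have : Finite (R ⧸ P ^ k) := Nat.finite_of_card_ne_zero (left_ne_zero_of_mul hne)
  have : Finite (R ⧸ Q ^ k) := Nat.finite_of_card_ne_zero (right_ne_zero_of_mul hne)
  have hleP := pow_le_natCard_quotient_pow hp hp₀ hP hcop hPQ k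
  have hleQ := pow_le_natCard_quotient_pow hp hp₀ hQ hcop.symm (mul_comm Q P ▸ hPQ) k
  exact ((mul_eq_mul_iff_eq_and_eq_of_pos hleP hleQ (Nat.pos_of_neZero _) Nat.card_pos).mp
    hcard.symm).1.symm

lemma nonempty_quotient_pow_ringEquiv_zmod (hR : Module.finrank ℤ R = 2) (hp : p.Prime)
    (hP : P ≠ ⊤) (hQ : Q ≠ ⊤) (hcop : IsCoprime P Q) (hPQ : P * Q = Ideal.span {(p : R)}) (k : ℕ) :
    Nonempty (R ⧸ P ^ k ≃+* ZMod (p ^ k)) := by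
  have hcard := natCard_quotient_pow_of_mul_eq_span_natCast hR hp hP hQ hcop hPQ k
  have := charP_quotient_pow_of_mul_eq_span_natCast hp
    (natCast_mem_nonZeroDivisors_of_isTorsionFree hp.ne_zero) hP hcop hPQ k
  have : Finite (R ⧸ P ^ k) := Nat.finite_of_card_ne_zero (hcard ▸ pow_ne_zero k hp.ne_zero)
  have := Fintype.ofFinite (R ⧸ P ^ k)
  exact ⟨(ZMod.ringEquiv _ (Nat.card_eq_fintype_card.symm.trans hcard)).symm⟩

theorem eisenstein_quotient_mixed_prime_powers_general (hR : Module.finrank ℤ R = 2)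
    (hp : p.Prime) [IsReduced (R ⧸ Ideal.span {(p : R)})] [P.IsPrime] [Q.IsPrime]
    (hPQ : P * Q = Ideal.span {(p : R)}) (k m : ℕ) :
    Nonempty (R ⧸ P ^ k * Q ^ m ≃+* ZMod (p ^ k) × ZMod (p ^ m)) := by
  have : Module.Finite ℤ R := Module.finite_of_finrank_pos (by omega)
  have : NeZero p := ⟨hp.ne_zero⟩
  have : Finite (R ⧸ Ideal.span {(p : R)}) := Nat.finite_of_card_ne_zero <| by
    rw [natCard_quotient_span_natCast]; exact pow_ne_zero _ hp.ne_zero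
  have hP : P ≠ ⊤ := Ideal.IsPrime.ne_top ‹_›
  have hQ : Q ≠ ⊤ := Ideal.IsPrime.ne_top ‹_›
  have hcop : IsCoprime P Q := isCoprime_of_mul_eq_span_singleton_of_isReduced
    (natCast_mem_nonZeroDivisors_of_isTorsionFree hp.ne_zero) hPQ
  obtain ⟨eP⟩ := nonempty_quotient_pow_ringEquiv_zmod hR hp hP hQ hcop hPQ k
  obtain ⟨eQ⟩ := nonempty_quotient_pow_ringEquiv_zmod hR hp hQ hP hcop.symm (mul_comm Q P ▸ hPQ) m
  exact ⟨(Ideal.quotientMulEquivQuotientProd _ _ hcop.pow).trans (eP.prodCongr eQ)⟩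

end FreeOverInt

lemma isReduced_adjoinRoot_quotient_map {A : Type*} [CommRing A] {I : Ideal A} {f : A[X]}
    (hf : IsRadical (f.map (Ideal.Quotient.mk I))) :
    IsReduced (AdjoinRoot f ⧸ I.map (AdjoinRoot.of f)) := by
  have := (Ideal.isRadical_iff_quotient_reduced _).mp (isRadical_iff_span_singleton.mp hf)
  exact isReduced_of_injective (AdjoinRoot.quotEquivQuotMap f I)
    (AdjoinRoot.quotEquivQuotMap f I).injective

namespace Eisenstein

lemma monic_X_sq_add_X_add_one : (X ^ 2 + X + 1 : ℤ[X]).Monic :=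
  cyclotomic_three ℤ ▸ cyclotomic.monic 3 ℤ

instance : Module.Free ℤ Eisenstein := monic_X_sq_add_X_add_one.free_adjoinRoot

lemma finrank_eq_two : Module.finrank ℤ Eisenstein = 2 := by
  rw [(AdjoinRoot.powerBasis' monic_X_sq_add_X_add_one).finrank, AdjoinRoot.powerBasis'_dim]
  compute_degree!

lemma isReduced_quotient_span_natCast {p : ℕ} (hp : p.Prime) (hp3 : p ≠ 3) :
    IsReduced (Eisenstein ⧸ Ideal.span {(p : Eisenstein)}) := by
  have : (Ideal.span {(p : ℤ)}).IsMaximal :=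
    PrincipalIdealRing.isMaximal_of_irreducible (Nat.prime_iff_prime_int.mp hp).irreducible
  let : Field (ℤ ⧸ Ideal.span {(p : ℤ)}) := Ideal.Quotient.field _
  have : NeZero ((3 : ℕ) : ℤ ⧸ Ideal.span {(p : ℤ)}) := ⟨fun h => hp3 <| by
    rw [← map_natCast (Ideal.Quotient.mk _), Ideal.Quotient.eq_zero_iff_mem,
      Ideal.mem_span_singleton, Int.natCast_dvd_natCast] at h
    exact (Nat.prime_dvd_prime_iff_eq hp Nat.prime_three).mp h⟩
  have hrad : IsRadical ((X ^ 2 + X + 1 : ℤ[X]).map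
      (Ideal.Quotient.mk (Ideal.span {(p : ℤ)}))) := by
    rw [← cyclotomic_three, map_cyclotomic]
    exact (squarefree_cyclotomic 3 _).isRadical
  have hmap : (Ideal.span {(p : ℤ)}).map (AdjoinRoot.of (X ^ 2 + X + 1 : ℤ[X])) =
      Ideal.span {(p : Eisenstein)} := by
    rw [Ideal.map_span, Set.image_singleton, map_natCast]
  exact hmap ▸ isReduced_adjoinRoot_quotient_map hrad

end Eisenstein

/-- for a rational prime `p ≡ 1 (mod 6)` and primes `π, π' ∈ ℤ[ζ]` with
`π·π'` associated to `p`, for all `0 ≤ l ≤ μ` the additive group of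
`ℤ[ζ]/(π^l · π'^(μ−l))` is isomorphic to `ZMod (p^l) × ZMod (p^(μ−l))`. -/
theorem eisenstein_quotient_mixed_prime_powers (p : ℕ) (hp : p.Prime) (hp6 : p % 6 = 1)
    (π π' : Eisenstein) (hπ : Prime π) (hπ' : Prime π')
    (hassoc : Associated (π * π') (p : Eisenstein)) :
    ∀ μ l : ℕ, l ≤ μ →
      Nonempty ((Eisenstein ⧸ Ideal.span {π ^ l * π' ^ (μ - l)}) ≃+
        (ZMod (p ^ l) × ZMod (p ^ (μ - l)))) := by
  intro μ l _
  have := Eisenstein.isReduced_quotient_span_natCast hp (by omega)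
  have := (Ideal.span_singleton_prime hπ.ne_zero).mpr hπ
  have := (Ideal.span_singleton_prime hπ'.ne_zero).mpr hπ'
  have hspan : Ideal.span {π} * Ideal.span {π'} = Ideal.span {(p : Eisenstein)} := by
    obtain ⟨u, hu⟩ := hassoc
    rw [Ideal.span_singleton_mul_span_singleton, ← hu, Ideal.span_singleton_mul_right_unit u.isUnit]
  rw [← Ideal.span_singleton_mul_span_singleton, ← Ideal.span_singleton_pow,
    ← Ideal.span_singleton_pow]
  exact (eisenstein_quotient_mixed_prime_powers_general Eisenstein.finrank_eq_two hp hspan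
    l (μ - l)).map RingEquiv.toAddEquiv
end
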